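/- Let d ≥ 1, let H = diag(h_1,…,h_d) with all h_i > 0, and let F : ℝ^d → [0,∞) be measurable. Define S̄(ω) = ∑_{k ∈ ℤ^d, k ≠ 0} F(ω + H^{-1}k) (a sum of nonnegative terms, possibly infinite). Then for every measurable K̂ : ℝ^d → ℝ: Φ_H(F, K̂) ≥ ∫_{ℝ^d} F(ω) S̄(ω) / (F(ω) + S̄(ω)) dω (with the convention that the integrand is 0 where F(ω) + S̄(ω) = 0 or S̄(ω) = ∞ is interpreted by taking the integrand equal to F(ω) there), and equality holds for the kernel K̂*(ω) = F(ω) / (F(ω) + S̄(ω)) (set to 0 where the denominator vanishes or is infinite). -/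

import Mathlib

open MeasureTheory Real

/-- The interpolation-error functional
`Φ_H(F, K̂) = ∫_{ℝ^d} F(ω) [(1 − K̂(ω))² + ∑_{k ∈ ℤ^d, k ≠ 0} K̂(ω + H⁻¹k)²] dω`,
where `H = diag(h₁,…,h_d)` and the inner sum is a (possibly infinite) sum of
nonnegative terms, so the value is taken in `ℝ≥0∞`. -/
noncomputable def Phi (d : ℕ) (h : Fin d → ℝ) (F : (Fin d → ℝ) → ℝ)
    (K : (Fin d → ℝ) → ℝ) : ENNReal :=
  ∫⁻ ω : Fin d → ℝ, ENNReal.ofReal (F ω) *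
    (ENNReal.ofReal ((1 - K ω) ^ 2) +
      ∑' k : {k : Fin d → ℤ // k ≠ 0},
        ENNReal.ofReal ((K (ω + fun i => (k.1 i : ℝ) / h i)) ^ 2))

/-- The smoothness class `𝓕(L, λ)` of spectral densities: measurable, integrable,
nonnegative `F` with `(2π)² ∫ F(ω) ∑ᵢ λᵢ² ωᵢ² dω ≤ L`. -/
def SpecClass (d : ℕ) (L : ℝ) (lam : Fin d → ℝ) : Set ((Fin d → ℝ) → ℝ) :=
  {F | Measurable F ∧ Integrable F ∧ (∀ ω, 0 ≤ F ω) ∧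
    ENNReal.ofReal ((2 * π) ^ 2) *
      ∫⁻ ω : Fin d → ℝ, ENNReal.ofReal (F ω * ∑ i, (lam i) ^ 2 * (ω i) ^ 2)
        ≤ ENNReal.ofReal L}

/-- `S̄(ω) = ∑_{k ∈ ℤ^d, k ≠ 0} F(ω + H⁻¹k)`, a possibly infinite sum of
nonnegative terms. -/
noncomputable def Sbar (d : ℕ) (h : Fin d → ℝ) (F : (Fin d → ℝ) → ℝ)
    (ω : Fin d → ℝ) : ENNReal :=
  ∑' k : {k : Fin d → ℤ // k ≠ 0}, ENNReal.ofReal (F (ω + fun i => (k.1 i : ℝ) / h i))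

/-!
Translation invariance turns the interpolation error into
`∫ F (1 - K)² + K² S`, where `S` collects the translates of `F`. For each frequency this is a
quadratic polynomial in the single number `K ω`, and completing the square,
`f (1 - c)² + c² s = f s / (f + s) + (f + s) (c - f / (f + s))²`,
exhibits the lower bound, the minimizer and the excess error of every other kernel at once.
-/

open scoped ENNReal

theorem mul_one_sub_sq_add_sq_mul {𝕜 : Type*} [Field 𝕜] {f s : 𝕜} (hfs : f + s ≠ 0) (c : 𝕜) :
    f * (1 - c) ^ 2 + c ^ 2 * s = f * s / (f + s) + (f + s) * (c - f / (f + s)) ^ 2 := by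
  field_simp
  ring

/-- The Wiener gain `f / (f + S)`: the factor `c` minimizing `f (1 - c)² + c² S`, for a signal of
power `f` observed in noise of power `S`. It is `0` for infinite noise, and for
`f = S = 0`, where every factor is optimal, through `0 / 0 = 0`. -/
noncomputable def wienerGain (f : ℝ) (S : ℝ≥0∞) : ℝ :=
  if S = ⊤ then 0 else f / (f + S.toReal)

/-- The Wiener error `f S / (f + S)`: the minimum of `f (1 - c)² + c² S` over `c`. For infinite
noise it is the limit `f`, whereas the quotient in `ℝ≥0∞` would be `0`. -/
noncomputable def wienerError (f : ℝ) (S : ℝ≥0∞) : ℝ≥0∞ :=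
  if S = ⊤ then .ofReal f else .ofReal f * S / (.ofReal f + S)

theorem ofReal_mul_one_sub_sq_add_sq_mul {f : ℝ} (hf : 0 ≤ f) (S : ℝ≥0∞) (c : ℝ) :
    .ofReal f * .ofReal ((1 - c) ^ 2) + .ofReal (c ^ 2) * S =
      wienerError f S + (.ofReal f + S) * .ofReal ((c - wienerGain f S) ^ 2) := by
  rcases eq_or_ne S ⊤ with rfl | hS
  · rcases eq_or_ne c 0 with rfl | hc
    · simp [wienerError, wienerGain]
    · have hc2 : ENNReal.ofReal (c ^ 2) ≠ 0 := by simpa using by positivity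
      simp [wienerError, wienerGain, ENNReal.mul_top hc2, ENNReal.top_mul hc2]
  · obtain ⟨s, hs, rfl⟩ : ∃ s : ℝ, 0 ≤ s ∧ .ofReal s = S :=
      ⟨S.toReal, ENNReal.toReal_nonneg, ENNReal.ofReal_toReal hS⟩
    rcases (add_nonneg hf hs).eq_or_lt' with hfs | hfs
    · obtain ⟨rfl, rfl⟩ := (add_eq_zero_iff_of_nonneg hf hs).1 hfs
      simp [wienerError]
    · have hError : wienerError f (.ofReal s) = .ofReal (f * s / (f + s)) := by
        rw [wienerError, if_neg hS, ← ENNReal.ofReal_mul hf, ← ENNReal.ofReal_add hf hs,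
          ← ENNReal.ofReal_div_of_pos hfs]
      have hGain : wienerGain f (.ofReal s) = f / (f + s) := by
        rw [wienerGain, if_neg hS, ENNReal.toReal_ofReal hs]
      rw [hError, hGain, ← ENNReal.ofReal_mul hf, ← ENNReal.ofReal_mul (sq_nonneg c),
        ← ENNReal.ofReal_add hf hs, ← ENNReal.ofReal_mul hfs.le,
        ← ENNReal.ofReal_add (by positivity) (by positivity),
        ← ENNReal.ofReal_add (by positivity) (by positivity),
        mul_one_sub_sq_add_sq_mul hfs.ne']

theorem measurable_wienerGain {α : Type*} [MeasurableSpace α] {f : α → ℝ} {S : α → ℝ≥0∞}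
    (hf : Measurable f) (hS : Measurable S) : Measurable fun x ↦ wienerGain (f x) (S x) :=
  .ite (hS (measurableSet_singleton ⊤)) measurable_const (hf.div (hf.add hS.ennreal_toReal))

theorem measurable_wienerError {α : Type*} [MeasurableSpace α] {f : α → ℝ} {S : α → ℝ≥0∞}
    (hf : Measurable f) (hS : Measurable S) : Measurable fun x ↦ wienerError (f x) (S x) :=
  .ite (hS (measurableSet_singleton ⊤)) hf.ennreal_ofReal (by fun_prop)

section Translates

variable {G ι : Type*} [AddGroup G]

/-- The energy `∑ₖ F(x - aₖ)` that the translates of the spectral density `F` by the shifts `aₖ`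
put at `x`. The sign makes it dual to the sum `∑ₖ K(x + aₖ)²` of the interpolation error; for the
shifts `H⁻¹k`, a symmetric family, this is `S̄`. -/
noncomputable def aliasedDensity (a : ι → G) (F : G → ℝ) (x : G) : ℝ≥0∞ :=
  ∑' k, .ofReal (F (x - a k))

variable [MeasurableSpace G]

/-- The functional `Φ` for a general family of shifts `aₖ` of a group in place of the nonzero
points `H⁻¹k` of the lattice in `ℝ^d`. -/
noncomputable def interpolationError (μ : Measure G) (a : ι → G) (F K : G → ℝ) : ℝ≥0∞ :=
  ∫⁻ x, .ofReal (F x) * (.ofReal ((1 - K x) ^ 2) + ∑' k, .ofReal (K (x + a k) ^ 2)) ∂μ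

variable [MeasurableAdd G] [Countable ι] {μ : Measure G} [μ.IsAddRightInvariant] (a : ι → G)

theorem measurable_aliasedDensity {F : G → ℝ} (hF : Measurable F) :
    Measurable (aliasedDensity a F) := by
  unfold aliasedDensity
  simp only [sub_eq_add_neg]
  fun_prop

theorem lintegral_mul_tsum_add_right {f g : G → ℝ≥0∞} (hf : Measurable f) (hg : Measurable g) :
    ∫⁻ x, f x * ∑' k, g (x + a k) ∂μ = ∫⁻ x, g x * ∑' k, f (x - a k) ∂μ := by
  calc
    _ = ∑' k, ∫⁻ x, f x * g (x + a k) ∂μ := by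
      simp_rw [← ENNReal.tsum_mul_left]
      exact lintegral_tsum fun k ↦ by fun_prop
    _ = ∑' k, ∫⁻ x, g x * f (x - a k) ∂μ := by
      congr! 2 with k
      simpa [mul_comm] using
        lintegral_add_right_eq_self (μ := μ) (fun x ↦ g x * f (x - a k)) (a k)
    _ = _ := by
      simp_rw [← ENNReal.tsum_mul_left, sub_eq_add_neg]
      exact (lintegral_tsum fun k ↦ by fun_prop).symm

theorem interpolationError_eq_lintegral {F K : G → ℝ} (hF : Measurable F) (hK : Measurable K) :
    interpolationError μ a F K =
      ∫⁻ x, .ofReal (F x) * .ofReal ((1 - K x) ^ 2) +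
        .ofReal (K x ^ 2) * aliasedDensity a F x ∂μ := by
  simp only [interpolationError, mul_add]
  rw [lintegral_add_left (by fun_prop), lintegral_add_left (by fun_prop),
    lintegral_mul_tsum_add_right a hF.ennreal_ofReal (hK.pow_const 2).ennreal_ofReal]
  rfl

theorem interpolationError_eq_add_excess {F K : G → ℝ} (hF : Measurable F) (hF0 : ∀ x, 0 ≤ F x)
    (hK : Measurable K) :
    interpolationError μ a F K =
      ∫⁻ x, wienerError (F x) (aliasedDensity a F x) ∂μ +
        ∫⁻ x, (.ofReal (F x) + aliasedDensity a F x) *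
          .ofReal ((K x - wienerGain (F x) (aliasedDensity a F x)) ^ 2) ∂μ := by
  rw [interpolationError_eq_lintegral a hF hK, ← lintegral_add_left
    (measurable_wienerError hF (measurable_aliasedDensity a hF))]
  exact lintegral_congr fun x ↦ ofReal_mul_one_sub_sq_add_sq_mul (hF0 x) _ _

theorem optimal_kernel_general {F : G → ℝ} (hF : Measurable F) (hF0 : ∀ x, 0 ≤ F x) :
    (∀ K : G → ℝ, Measurable K →
      ∫⁻ x, wienerError (F x) (aliasedDensity a F x) ∂μ ≤ interpolationError μ a F K) ∧
    interpolationError μ a F (fun x ↦ wienerGain (F x) (aliasedDensity a F x)) =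
      ∫⁻ x, wienerError (F x) (aliasedDensity a F x) ∂μ := by
  refine ⟨fun K hK ↦ ?_, ?_⟩
  · rw [interpolationError_eq_add_excess a hF hF0 hK]
    exact le_self_add
  · rw [interpolationError_eq_add_excess a hF hF0
      (measurable_wienerGain hF (measurable_aliasedDensity a hF))]
    simp

end Translates

/-- The shifts `H⁻¹k`, `k ∈ ℤ^d` nonzero, with `H = diag(h₁,…,h_d)`. -/
noncomputable def latticeShift {d : ℕ} (h : Fin d → ℝ) (k : {k : Fin d → ℤ // k ≠ 0}) :
    Fin d → ℝ :=
  fun i ↦ (k.1 i : ℝ) / h i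

theorem Phi_eq_interpolationError (d : ℕ) (h : Fin d → ℝ) :
    Phi d h = interpolationError volume (latticeShift h) :=
  rfl

theorem Sbar_eq_aliasedDensity (d : ℕ) (h : Fin d → ℝ) (F : (Fin d → ℝ) → ℝ) :
    Sbar d h F = aliasedDensity (latticeShift h) F := by
  funext ω
  let negEquiv : {k : Fin d → ℤ // k ≠ 0} ≃ {k : Fin d → ℤ // k ≠ 0} :=
    (Equiv.neg _).subtypeEquiv (by simp)
  have latticeShift_neg (k) : latticeShift h (negEquiv k) = -latticeShift h k := by
    ext i
    simp [latticeShift, negEquiv, neg_div]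
  rw [aliasedDensity, ← negEquiv.tsum_eq]
  simp_rw [latticeShift_neg, sub_neg_eq_add]
  rfl

/-- Optimality of the kernel `K̂*(ω) = F(ω)/(F(ω) + S̄(ω))` (Theorem 1): every
measurable kernel `K̂` has interpolation error at least
`∫ F(ω) S̄(ω)/(F(ω) + S̄(ω)) dω` (with integrand `0` where `F + S̄ = 0` and
integrand `F(ω)` where `S̄(ω) = ∞`), and `K̂*` attains this bound. -/
theorem optimal_kernel (d : ℕ) (hd : 1 ≤ d) (h : Fin d → ℝ) (hh : ∀ i, 0 < h i)
    (F : (Fin d → ℝ) → ℝ) (hFm : Measurable F) (hF0 : ∀ ω, 0 ≤ F ω)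
    (Kstar : (Fin d → ℝ) → ℝ)
    (hKstar : ∀ ω, Kstar ω =
      if Sbar d h F ω = ⊤ then 0 else F ω / (F ω + (Sbar d h F ω).toReal)) :
    (∀ K : (Fin d → ℝ) → ℝ, Measurable K →
      (∫⁻ ω : Fin d → ℝ,
          if Sbar d h F ω = ⊤ then ENNReal.ofReal (F ω)
          else ENNReal.ofReal (F ω) * Sbar d h F ω /
            (ENNReal.ofReal (F ω) + Sbar d h F ω))
        ≤ Phi d h F K) ∧
    Phi d h F Kstar
      = ∫⁻ ω : Fin d → ℝ,
          if Sbar d h F ω = ⊤ then ENNReal.ofReal (F ω)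
          else ENNReal.ofReal (F ω) * Sbar d h F ω /
            (ENNReal.ofReal (F ω) + Sbar d h F ω) := by
  simp only [Phi_eq_interpolationError, Sbar_eq_aliasedDensity] at hKstar ⊢
  exact funext hKstar ▸ optimal_kernel_general (latticeShift h) hFm hF0
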